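/- There exist constants c > 0 and C < ∞, depending only on d, such that for any ball ℬ = ℬ(z̄, e, r, r*) and any Lebesgue measurable set E ⊆ π*(ℬ) of positive measure, ‖T(χ_E)‖_{L^{d+1,∞}} ≥ c (|E|/|π*(ℬ)|)^C |E|^{d/(d+1)}. -/

import Mathlib

open MeasureTheory ENNReal
open scoped RealInnerProductSpace

noncomputable section

/-- `ℝ^{d-1}` -/
abbrev Vec (n : ℕ) : Type := EuclideanSpace ℝ (Fin n)

/-- `ℝ^d = ℝ^{d-1} × ℝ`, a point `x = (x', x_d)` -/
abbrev Pt (n : ℕ) : Type := Vec n × ℝ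

/-- The Radon-like transform `Tf(x) = ∫_{ℝ^{d-1}} f(x' - t, x_d - |t|²) dt`. -/
def radonT (n : ℕ) (f : Pt n → ℝ≥0∞) (x : Pt n) : ℝ≥0∞ :=
  ∫⁻ t : Vec n, f (x.1 - t, x.2 - ‖t‖ ^ 2)

/-- The incidence functional `𝒯(E, E*) = ∫_E T(χ_{E*})`. -/
def incT (n : ℕ) (E Estar : Set (Pt n)) : ℝ≥0∞ :=
  ∫⁻ x in E, radonT n (Estar.indicator 1) x

/-- Admissibility of the parameters of a ball `ℬ(z̄, e, r, r*)`:
the center `z̄ = (x̄, x̄*)` lies on the incidence manifold `ℐ`, `ρ > 0`,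
`e` is an orthonormal basis of `ℝ^{d-1}`, and `r_j r*_j = ρ > 0` for all `j`. -/
def IsBallParams (n : ℕ) (zb : Pt n × Pt n) (e : Fin n → Vec n)
    (r rs : Fin n → ℝ) (ρ : ℝ) : Prop :=
  zb.2.2 = zb.1.2 - ‖zb.2.1 - zb.1.1‖ ^ 2 ∧ 0 < ρ ∧ Orthonormal ℝ e ∧
    (∀ j, 0 < r j) ∧ (∀ j, 0 < rs j) ∧ (∀ j, r j * rs j = ρ)

/-- The ball `ℬ(z̄, e, r, r*)`, a subset of the incidence manifold
`ℐ = {(x,y) : y_d = x_d - |y' - x'|²} ⊆ ℝ^d × ℝ^d`. -/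
def ballI (n : ℕ) (zb : Pt n × Pt n) (e : Fin n → Vec n)
    (r rs : Fin n → ℝ) (ρ : ℝ) : Set (Pt n × Pt n) :=
  fun z => z.2.2 = z.1.2 - ‖z.2.1 - z.1.1‖ ^ 2 ∧
    (∀ j, |⟪z.1.1 - zb.1.1, e j⟫| < r j) ∧
    |z.1.2 - zb.2.2 - ‖z.1.1 - zb.2.1‖ ^ 2| < ρ ∧
    (∀ j, |⟪z.2.1 - zb.2.1, e j⟫| < rs j) ∧
    |z.2.2 - zb.1.2 + ‖z.2.1 - zb.1.1‖ ^ 2| < ρ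

/-- The weak-type `L^{d+1,∞}` quasinorm `sup_{λ>0} λ |{g > λ}|^{1/(d+1)}`
of a nonnegative function `g`. -/
def weakN (n : ℕ) (q : ℝ) (g : Pt n → ℝ≥0∞) : ℝ≥0∞ :=
  ⨆ (lam : ℝ) (_ : 0 < lam),
    ENNReal.ofReal lam * volume {x : Pt n | ENNReal.ofReal lam < g x} ^ (1 / q)

lemma box_vol (n : ℕ) (e : Fin n → Vec n) (he : Orthonormal ℝ e) (a : Vec n) (r : Fin n → ℝ)
    (hr : ∀ j, 0 < r j) :
    MeasurableSet {v : Vec n | ∀ j, |⟪v - a, e j⟫| < r j} ∧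
    volume {v : Vec n | ∀ j, |⟪v - a, e j⟫| < r j} = ENNReal.ofReal (∏ j, (2 * r j)) := by
  have hm : MeasurableSet {v : Vec n | ∀ j, |⟪v - a, e j⟫| < r j} := by
    have : {v : Vec n | ∀ j, |⟪v - a, e j⟫| < r j} = ⋂ j, {v : Vec n | |⟪v - a, e j⟫| < r j} := by
      ext; simp
    rw [this]
    refine MeasurableSet.iInter fun j => ?_
    exact (isOpen_lt (by fun_prop) (by fun_prop)).measurableSet
  refine ⟨hm, ?_⟩
  have hspan : ⊤ ≤ Submodule.span ℝ (Set.range e) := by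
    rw [he.linearIndependent.span_eq_top_of_card_eq_finrank' (by simp)]
  let b : OrthonormalBasis (Fin n) ℝ (Vec n) := OrthonormalBasis.mk he hspan
  have hb : ∀ j, b j = e j := fun j => by simp [b]
  have h1 := (EuclideanSpace.volume_preserving_symm_measurableEquiv_toLp (Fin n)).comp
    b.measurePreserving_repr
  have hc : ∀ v j, ((MeasurableEquiv.toLp 2 (Fin n → ℝ)).symm (b.repr v)) j = ⟪v, e j⟫ := by
    intro v j
    have := b.repr_apply_apply v j
    rw [hb, real_inner_comm] at this
    exact this
  have h2 := h1.measure_preimage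
    (s := Set.univ.pi fun j => Set.Ioo (⟪a, e j⟫ - r j) (⟪a, e j⟫ + r j))
    (MeasurableSet.univ_pi fun j => measurableSet_Ioo).nullMeasurableSet
  rw [Real.volume_pi_Ioo] at h2
  have h3 : {v : Vec n | ∀ j, |⟪v - a, e j⟫| < r j} =
      (⇑(MeasurableEquiv.toLp 2 (Fin n → ℝ)).symm ∘ ⇑b.repr) ⁻¹'
        (Set.univ.pi fun j => Set.Ioo (⟪a, e j⟫ - r j) (⟪a, e j⟫ + r j)) := by
    ext v
    simp only [Set.mem_setOf_eq, Set.mem_preimage, Set.mem_univ_pi, Function.comp_apply, hc,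
      Set.mem_Ioo, inner_sub_left, abs_lt]
    refine forall_congr' fun j => ?_
    constructor <;> rintro ⟨h, h⟩ <;> constructor <;> linarith
  rw [h3, h2, ENNReal.ofReal_prod_of_nonneg (fun j _ => by have := hr j; positivity)]
  refine Finset.prod_congr rfl fun j _ => ?_
  congr 1; ring

lemma slab_vol (n : ℕ) (B : Set (Vec n)) (hB : MeasurableSet B) (φ : Vec n → ℝ)
    (hφ : Continuous φ) (h : ℝ) :
    MeasurableSet {x : Pt n | x.1 ∈ B ∧ |x.2 - φ x.1| < h} ∧
    volume {x : Pt n | x.1 ∈ B ∧ |x.2 - φ x.1| < h} = volume B * ENNReal.ofReal (2 * h) := by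
  have hm : MeasurableSet {x : Pt n | x.1 ∈ B ∧ |x.2 - φ x.1| < h} :=
    (measurable_fst hB).inter
      (isOpen_lt (f := fun x : Pt n => |x.2 - φ x.1|) (by fun_prop) continuous_const).measurableSet
  refine ⟨hm, ?_⟩
  rw [Measure.volume_eq_prod, Measure.prod_apply hm]
  have : ∀ x : Vec n, volume (Prod.mk x ⁻¹' {x : Pt n | x.1 ∈ B ∧ |x.2 - φ x.1| < h}) =
      B.indicator (fun _ => ENNReal.ofReal (2 * h)) x := by
    intro x
    by_cases hx : x ∈ B
    · have : (Prod.mk x ⁻¹' {x : Pt n | x.1 ∈ B ∧ |x.2 - φ x.1| < h}) =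
        Set.Ioo (φ x - h) (φ x + h) := by
        ext s
        simp only [Set.mem_preimage, Set.mem_setOf_eq, hx, true_and, abs_lt, Set.mem_Ioo]
        constructor <;> rintro ⟨h, h⟩ <;> constructor <;> linarith
      rw [this, Real.volume_Ioo, Set.indicator_of_mem hx]
      congr 1; ring
    · have : (Prod.mk x ⁻¹' {x : Pt n | x.1 ∈ B ∧ |x.2 - φ x.1| < h}) = ∅ := by
        ext s
        simp [hx]
      simp [this, hx]
  simp_rw [this]
  rw [lintegral_indicator hB, setLIntegral_const, mul_comm]

lemma radon_eq (n : ℕ) (E : Set (Pt n)) (x : Pt n) :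
    radonT n (E.indicator 1) x =
      ∫⁻ y : Vec n, E.indicator (1 : Pt n → ℝ≥0∞) (y, x.2 - ‖x.1 - y‖ ^ 2) := by
  unfold radonT
  rw [← lintegral_sub_left_eq_self _ x.1]
  simp

lemma radon_meas (n : ℕ) (E : Set (Pt n)) (hE : MeasurableSet E) :
    Measurable (radonT n (E.indicator 1)) := by
  have : radonT n (E.indicator 1) = fun x => ∫⁻ y : Vec n,
      E.indicator (1 : Pt n → ℝ≥0∞) (y, x.2 - ‖x.1 - y‖ ^ 2) := funext (radon_eq n E)
  rw [this]
  refine Measurable.lintegral_prod_right'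
    (f := fun p : Pt n × Vec n => E.indicator (1 : Pt n → ℝ≥0∞) (p.2, p.1.2 - ‖p.1.1 - p.2‖ ^ 2)) ?_
  exact (measurable_one.indicator hE).comp (by fun_prop)

lemma slab_int (n : ℕ) (E F : Set (Pt n)) (hE : MeasurableSet E) (hF : MeasurableSet F)
    (B : Set (Vec n)) (hB : MeasurableSet B)
    (hinc : ∀ x ∈ B, ∀ y ∈ E, (x, y.2 + ‖x - y.1‖ ^ 2) ∈ F) :
    volume B * volume E ≤ ∫⁻ x in F, radonT n (E.indicator 1) x := by
  rw [← lintegral_indicator hF, Measure.volume_eq_prod,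
    lintegral_prod _ (((radon_meas n E hE).indicator hF).aemeasurable)]
  have key : ∀ x, B.indicator (fun _ => volume E) x ≤
      ∫⁻ u : ℝ, F.indicator (radonT n (E.indicator 1)) (x, u) := by
    intro x
    by_cases hx : x ∈ B
    swap
    · simp [hx]
    rw [Set.indicator_of_mem hx]
    have e1 : ∀ u : ℝ, F.indicator (radonT n (E.indicator 1)) (x, u) =
        ∫⁻ y : Vec n, E.indicator (1 : Pt n → ℝ≥0∞) (y, u - ‖x - y‖ ^ 2) := by
      intro u
      by_cases hu : (x, u) ∈ F
      · rw [Set.indicator_of_mem hu, radon_eq]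
      · rw [Set.indicator_of_notMem hu]
        symm
        rw [lintegral_eq_zero_iff']
        · refine Filter.Eventually.of_forall fun y => ?_
          apply Set.indicator_of_notMem
          intro hy
          apply hu
          have := hinc x hx _ hy
          simpa using this
        · exact ((measurable_one.indicator hE).comp (by fun_prop)).aemeasurable
    simp_rw [e1]
    rw [lintegral_lintegral_swap]
    swap
    · exact ((measurable_one.indicator hE).comp
        (f := fun p : ℝ × Vec n => ((p.2, p.1 - ‖x - p.2‖ ^ 2) : Pt n)) (by fun_prop)).aemeasurable
    have e2 : ∀ y : Vec n, ∫⁻ u : ℝ, E.indicator (1 : Pt n → ℝ≥0∞) (y, u - ‖x - y‖ ^ 2) =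
        ∫⁻ u : ℝ, E.indicator (1 : Pt n → ℝ≥0∞) (y, u) := fun y =>
      lintegral_sub_right_eq_self (fun u => E.indicator (1 : Pt n → ℝ≥0∞) (y, u)) _
    simp_rw [e2]
    rw [← lintegral_prod _ ((measurable_one.indicator hE).aemeasurable),
      ← Measure.volume_eq_prod, lintegral_indicator_one hE]
  refine le_trans ?_ (lintegral_mono key)
  rw [lintegral_indicator hB, setLIntegral_const, mul_comm, ← Measure.volume_eq_prod]

lemma proj_eq (n : ℕ) (zb : Pt n × Pt n) (e : Fin n → Vec n)
    (r rs : Fin n → ℝ) (ρ : ℝ) (h : IsBallParams n zb e r rs ρ) :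
    Prod.snd '' ballI n zb e r rs ρ =
      {y : Pt n | y.1 ∈ {v : Vec n | ∀ j, |⟪v - zb.2.1, e j⟫| < rs j} ∧
        |y.2 - (fun v : Vec n => zb.1.2 - ‖v - zb.1.1‖ ^ 2) y.1| < ρ} := by
  obtain ⟨h1, hρ, he, hr, hrs, hrr⟩ := h
  ext y
  constructor
  · rintro ⟨z, ⟨h2, h3, h4, h5, h6⟩, rfl⟩
    refine ⟨h5, ?_⟩
    convert h6 using 2
    ring
  · rintro ⟨h2, h3⟩
    beta_reduce at h3
    refine ⟨((zb.1.1, y.2 + ‖y.1 - zb.1.1‖ ^ 2), y), ⟨?_, ?_, ?_, h2, ?_⟩, rfl⟩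
    · simp
    · intro j; simpa using hr j
    · dsimp only
      rw [h1, norm_sub_rev zb.1.1 zb.2.1]
      convert h3 using 2
      ring
    · convert h3 using 2
      dsimp only
      ring

lemma inc_bound (n : ℕ) (e : Fin n → Vec n) (he : Orthonormal ℝ e) (r rs : Fin n → ℝ) (ρ : ℝ)
    (hrr : ∀ j, r j * rs j = ρ) (u v : Vec n)
    (hu : ∀ j, |⟪u, e j⟫| < r j) (hv : ∀ j, |⟪v, e j⟫| < rs j) :
    |⟪u, v⟫| ≤ n * ρ := by
  have hspan : ⊤ ≤ Submodule.span ℝ (Set.range e) := by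
    rw [he.linearIndependent.span_eq_top_of_card_eq_finrank' (by simp)]
  let b : OrthonormalBasis (Fin n) ℝ (Vec n) := OrthonormalBasis.mk he hspan
  have hb : ∀ j, b j = e j := fun j => by simp [b]
  rw [← b.sum_inner_mul_inner u v]
  refine (Finset.abs_sum_le_sum_abs _ _).trans ?_
  have : ∀ j ∈ Finset.univ, |⟪u, b j⟫ * ⟪b j, v⟫| ≤ ρ := by
    intro j _
    rw [hb, abs_mul, real_inner_comm v, ← hrr j]
    exact mul_le_mul (hu j).le (hv j).le (abs_nonneg _) ((abs_nonneg _).trans (hu j).le)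
  refine (Finset.sum_le_sum this).trans ?_
  simp

lemma final_real (n : ℕ) (V R S ρ A : ℝ) (hV : 0 < V) (hR : 0 < R) (hS : 0 < S) (hρ : 0 < ρ)
    (hA : 0 < A) (hRS : R * S = (4 * ρ) ^ n) :
    1 / (8 * A) * (V / (2 * ρ * S)) ^ ((2 : ℝ) / (n + 2)) * V ^ (((n : ℝ) + 1) / (n + 2)) ≤
      V / (4 * A * ρ) * (R * V / (2 * S)) ^ (1 / ((n : ℝ) + 2)) := by
  have hq : ((n + 2 : ℕ) : ℝ) ≠ 0 := by positivity
  have hq2 : (n + 2 : ℕ) ≠ 0 := by omega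
  refine le_of_pow_le_pow_left₀ hq2 (by positivity) ?_
  have p1 : ∀ x : ℝ, 0 < x → ∀ k : ℕ, (x ^ ((k : ℝ) / (n + 2))) ^ (n + 2) = x ^ k := by
    intro x hx k
    rw [← Real.rpow_natCast, ← Real.rpow_mul hx.le]
    have : (k : ℝ) / (n + 2) * ((n + 2 : ℕ) : ℝ) = k := by
      push_cast at hq ⊢
      field_simp
    rw [this, Real.rpow_natCast]
  rw [mul_pow, mul_pow, mul_pow]
  have a1 := p1 (V / (2 * ρ * S)) (by positivity) 2
  have a2 := p1 V hV (n + 1)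
  have a3 := p1 (R * V / (2 * S)) (by positivity) 1
  push_cast at a1 a2 a3
  rw [a1, a2, a3, pow_one]
  have hR2 : R = (4 * ρ) ^ n / S := by rw [← hRS]; field_simp
  have h8 : (1 / (8 * A)) ^ (n + 2) ≤ 1 / 8 * (1 / A) ^ (n + 2) := by
    have : 1 / (8 * A) = 1 / 8 * (1 / A) := by field_simp
    rw [this, mul_pow]
    gcongr
    exact pow_le_of_le_one (by norm_num) (by norm_num) hq2
  have e : (V / (4 * A * ρ)) ^ (n + 2) * (R * V / (2 * S)) =
      1 / 8 * (1 / A) ^ (n + 2) * (V / (2 * ρ * S)) ^ 2 * V ^ (n + 1) := by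
    rw [hR2]
    simp only [div_pow, mul_pow, pow_add, one_pow, pow_one]
    field_simp
    norm_num
  rw [e]
  gcongr

lemma main_aux (n : ℕ) (zb : Pt n × Pt n) (e : Fin n → Vec n)
    (r rs : Fin n → ℝ) (ρ : ℝ) (hp : IsBallParams n zb e r rs ρ)
    (E : Set (Pt n)) (hE : MeasurableSet E)
    (hsub : E ⊆ Prod.snd '' ballI n zb e r rs ρ) (hpos : 0 < volume E) :
    ENNReal.ofReal (1 / (8 * (2 * n + 1))) *
            (volume E / volume (Prod.snd '' ballI n zb e r rs ρ)) ^ ((2 : ℝ) / (n + 2)) *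
            volume E ^ (((n : ℝ) + 1) / (n + 2)) ≤
          weakN n ((n : ℝ) + 2) (radonT n (E.indicator 1)) := by
  rw [proj_eq n zb e r rs ρ hp] at hsub ⊢
  obtain ⟨h1, hρ, he, hr, hrs, hrr⟩ := hp
  set Bs := {v : Vec n | ∀ j, |⟪v - zb.2.1, e j⟫| < rs j} with hBs
  set B := {v : Vec n | ∀ j, |⟪v - zb.1.1, e j⟫| < r j} with hB
  obtain ⟨mBs, vBs⟩ := box_vol n e he zb.2.1 rs hrs
  obtain ⟨mB, vB⟩ := box_vol n e he zb.1.1 r hr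
  rw [← hBs] at mBs vBs
  rw [← hB] at mB vB
  obtain ⟨mP, vP⟩ := slab_vol n Bs mBs (fun v : Vec n => zb.1.2 - ‖v - zb.1.1‖ ^ 2)
    (by fun_prop) ρ
  set P := {y : Pt n | y.1 ∈ Bs ∧
        |y.2 - (fun v : Vec n => zb.1.2 - ‖v - zb.1.1‖ ^ 2) y.1| < ρ} with hP
  set A : ℝ := 2 * n + 1 with hA
  have hA0 : 0 < A := by positivity
  obtain ⟨mF, vF⟩ := slab_vol n B mB (fun v : Vec n => zb.2.2 + ‖v - zb.2.1‖ ^ 2)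
    (by fun_prop) (A * ρ)
  set F := {y : Pt n | y.1 ∈ B ∧
        |y.2 - (fun v : Vec n => zb.2.2 + ‖v - zb.2.1‖ ^ 2) y.1| < A * ρ} with hF
  set R := ∏ j, (2 * r j) with hRdef
  set S := ∏ j, (2 * rs j) with hSdef
  have hR : 0 < R := Finset.prod_pos fun j _ => by have := hr j; positivity
  have hS : 0 < S := Finset.prod_pos fun j _ => by have := hrs j; positivity
  have hRS : R * S = (4 * ρ) ^ n := by
    rw [hRdef, hSdef, ← Finset.prod_mul_distrib]
    rw [Finset.prod_congr rfl (g := fun _ => 4 * ρ)]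
    · simp
    · intro j _
      rw [← hrr j]; ring
  have vP2 : volume P = ENNReal.ofReal (2 * ρ * S) := by
    rw [vP, vBs, ← ENNReal.ofReal_mul hS.le]; congr 1; ring
  have vF2 : volume F = ENNReal.ofReal (R * (2 * (A * ρ))) := by
    rw [vF, vB, ← ENNReal.ofReal_mul hR.le]
  have hfin : volume E ≠ ∞ := by
    refine ne_top_of_le_ne_top ?_ (measure_mono hsub)
    rw [vP2]; exact ENNReal.ofReal_ne_top
  set V := (volume E).toReal with hVdef
  have hV : 0 < V := ENNReal.toReal_pos hpos.ne' hfin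
  have vE : volume E = ENNReal.ofReal V := (ENNReal.ofReal_toReal hfin).symm
  set lam : ℝ := V / (4 * A * ρ) with hlam
  have hlam0 : 0 < lam := by positivity
  set g := radonT n (E.indicator 1) with hg
  have mg : Measurable g := radon_meas n E hE
  set G := {x : Pt n | ENNReal.ofReal lam < g x} with hG
  have mG : MeasurableSet G := measurableSet_lt measurable_const mg
  -- pointwise upper bound
  have gle : ∀ x, g x ≤ ENNReal.ofReal S := by
    intro x
    rw [hg, radon_eq, ← vBs, ← lintegral_indicator_one mBs]
    refine lintegral_mono fun y => ?_
    by_cases hy : (y, x.2 - ‖x.1 - y‖ ^ 2) ∈ E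
    · have hyB : y ∈ Bs := (hsub hy).1
      simp [hy, hyB]
    · simp [hy]
  have low := slab_int n E F hE mF B mB (by
    intro x hx y hy
    obtain ⟨hy1, hy2⟩ := hsub hy
    refine ⟨hx, ?_⟩
    beta_reduce at hy2 ⊢
    dsimp only
    have ib := inc_bound n e he r rs ρ hrr (x - zb.1.1) (y.1 - zb.2.1) hx hy1
    have id : y.2 + ‖x - y.1‖ ^ 2 - (zb.2.2 + ‖x - zb.2.1‖ ^ 2) =
        (y.2 - (zb.1.2 - ‖y.1 - zb.1.1‖ ^ 2)) - 2 * ⟪x - zb.1.1, y.1 - zb.2.1⟫ := by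
      rw [h1]
      simp only [← real_inner_self_eq_norm_sq, inner_sub_left, inner_sub_right]
      rw [real_inner_comm x y.1, real_inner_comm x zb.2.1, real_inner_comm zb.1.1 y.1,
        real_inner_comm zb.1.1 zb.2.1]
      ring
    rw [id]
    rw [abs_lt] at hy2 ⊢
    rw [abs_le] at ib
    constructor <;> nlinarith)
  have up : ∫⁻ x in F, g x ≤ ENNReal.ofReal S * volume G + ENNReal.ofReal lam * volume F := by
    rw [← lintegral_inter_add_diff g F mG]
    gcongr
    · calc ∫⁻ x in F ∩ G, g x ≤ ∫⁻ x in F ∩ G, ENNReal.ofReal S := lintegral_mono gle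
        _ = ENNReal.ofReal S * volume (F ∩ G) := by rw [setLIntegral_const]
        _ ≤ _ := by gcongr; exact Set.inter_subset_right
    · calc ∫⁻ x in F \ G, g x ≤ ∫⁻ x in F \ G, ENNReal.ofReal lam :=
            setLIntegral_mono measurable_const fun x hx => not_lt.1 hx.2
        _ = ENNReal.ofReal lam * volume (F \ G) := by rw [setLIntegral_const]
        _ ≤ _ := by gcongr; exact Set.diff_subset
  have mlow : ENNReal.ofReal (R * V / (2 * S)) ≤ volume G := by
    by_cases hGt : volume G = ∞
    · rw [hGt]; exact le_top
    have h := low.trans up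
    rw [vB, vE, vF2, ← ENNReal.ofReal_toReal hGt, ← ENNReal.ofReal_mul hR.le,
      ← ENNReal.ofReal_mul hS.le, ← ENNReal.ofReal_mul hlam0.le,
      ← ENNReal.ofReal_add (by positivity) (by positivity),
      ENNReal.ofReal_le_ofReal_iff (by positivity)] at h
    rw [← ENNReal.ofReal_toReal hGt]
    apply ENNReal.ofReal_le_ofReal
    have hl : lam * (R * (2 * (A * ρ))) = R * V / 2 := by rw [hlam]; field_simp; norm_num
    rw [hl] at h
    rw [div_le_iff₀ (by positivity)]
    linarith
  have hfinal := final_real n V R S ρ A hV hR hS hρ hA0 hRS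
  calc _ = ENNReal.ofReal (1 / (8 * A) * (V / (2 * ρ * S)) ^ ((2 : ℝ) / (n + 2)) *
        V ^ (((n : ℝ) + 1) / (n + 2))) := by
        rw [vP2, vE, ← ENNReal.ofReal_div_of_pos (by positivity),
          ENNReal.ofReal_rpow_of_pos (by positivity), ENNReal.ofReal_rpow_of_pos hV,
          ← ENNReal.ofReal_mul (by positivity), ← ENNReal.ofReal_mul (by positivity)]
    _ ≤ ENNReal.ofReal (lam * (R * V / (2 * S)) ^ (1 / ((n : ℝ) + 2))) :=
        ENNReal.ofReal_le_ofReal hfinal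
    _ = ENNReal.ofReal lam * ENNReal.ofReal (R * V / (2 * S)) ^ (1 / ((n : ℝ) + 2)) := by
        rw [ENNReal.ofReal_mul hlam0.le, ENNReal.ofReal_rpow_of_pos (by positivity)]
    _ ≤ ENNReal.ofReal lam * volume G ^ (1 / ((n : ℝ) + 2)) := by
        gcongr
    _ ≤ _ := by
        unfold weakN
        exact le_iSup₂_of_le lam hlam0 le_rfl

/-- Theorem thm:single (i), converse half: for any ball `ℬ` and
any `E ⊆ π*(ℬ)` of positive measure,
`‖T χ_E‖_{L^{d+1,∞}} ≥ c (|E|/|π*(ℬ)|)^C |E|^{d/(d+1)}`. -/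
theorem stmt9 (d : ℕ) (hd : 2 ≤ d) :
    ∃ c C : ℝ, 0 < c ∧ 0 < C ∧
      ∀ (zb : Pt (d - 1) × Pt (d - 1)) (e : Fin (d - 1) → Vec (d - 1))
        (r rs : Fin (d - 1) → ℝ) (ρ : ℝ), IsBallParams (d - 1) zb e r rs ρ →
      ∀ (E : Set (Pt (d - 1))), MeasurableSet E →
        E ⊆ Prod.snd '' ballI (d - 1) zb e r rs ρ → 0 < volume E →
        ENNReal.ofReal c *
            (volume E / volume (Prod.snd '' ballI (d - 1) zb e r rs ρ)) ^ C *
            volume E ^ ((d : ℝ) / (d + 1)) ≤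
          weakN (d - 1) ((d : ℝ) + 1) (radonT (d - 1) (E.indicator 1)) := by
  obtain ⟨n, rfl⟩ : ∃ n, d = n + 1 := ⟨d - 1, by omega⟩
  refine ⟨1 / (8 * (2 * n + 1)), (2 : ℝ) / (n + 2), by positivity, by positivity, ?_⟩
  intro zb e r rs ρ hp E hE hsub hpos
  have h := main_aux n zb e r rs ρ hp E hE hsub hpos
  have e1 : (((n + 1 : ℕ) : ℝ) + 1) = (n : ℝ) + 2 := by push_cast; ring
  rw [e1]
  push_cast
  exact h
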